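/- arXiv:2110.08836 — 2 statements merged into one kernel-verified Lean document; each statement's English description precedes it below -/
import Mathlib

section
/- Let m, ℓ ≥ 1, let d₁ ≥ d₂ ≥ … ≥ d_m be natural numbers and e₁, …, e_ℓ be natural numbers. Let 1 ≤ p < q ≤ m with d_p = d_{p+1} = … = d_{q−1} ≥ d_q ≥ 1, and define d'_i = d_i for i ∉ {p,q}, d'_p = d_p + 1, d'_q = d_q − 1. If there exists an index j with d_p ≥ e_j ≥ d_q, then ∑_{i=1}^m ∑_{j=1}^ℓ min(d'_i, e_j) < ∑_{i=1}^m ∑_{j=1}^ℓ min(d_i, e_j). -/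
open Finset

/-!
For a fixed family `e`, the function `t ↦ ∑ⱼ min(t, eⱼ)` is concave: its increment from `t` to
`t + 1` is `#{j | t < eⱼ}`. Raising `d_p` by one therefore gains `#{j | d_p < eⱼ}`, and lowering
`d_q` by one loses `#{j | d_q ≤ eⱼ}`. As `d_q ≤ d_p`, the net loss is exactly
`#{j | d_q ≤ eⱼ ≤ d_p}`.
-/

section SumUpdate

variable {ι α M : Type*} [Fintype ι] [DecidableEq ι] [AddCommMonoid M]

theorem sum_comp_update_add (f : α → M) (d : ι → α) (i₀ : ι) (a : α) :
    ∑ i, f (Function.update d i₀ a i) + f (d i₀) = ∑ i, f (d i) + f a := by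
  simp only [Function.apply_update (fun _ => f)]
  rw [sum_update_of_mem (mem_univ i₀), add_assoc,
    ← sum_eq_sum_sdiff_singleton_add (mem_univ i₀) (fun i => f (d i)), add_comm]

end SumUpdate

section Counting

variable {κ : Type*}

theorem sum_min_add_one (s : Finset κ) (e : κ → ℕ) (t : ℕ) :
    ∑ j ∈ s, min (t + 1) (e j) = ∑ j ∈ s, min t (e j) + #{j ∈ s | t < e j} := by
  rw [card_filter, ← sum_add_distrib]
  refine sum_congr rfl fun j _ => ?_
  split_ifs <;> omega

theorem card_filter_le_eq_add_card_filter_lt {α : Type*} [LinearOrder α] (s : Finset κ)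
    (e : κ → α) {a b : α} (hab : a ≤ b) :
    #{j ∈ s | a ≤ e j} = #{j ∈ s | a ≤ e j ∧ e j ≤ b} + #{j ∈ s | b < e j} := by
  have hgt : {j ∈ s | a ≤ e j ∧ ¬ e j ≤ b} = {j ∈ s | b < e j} :=
    filter_congr fun j _ => by rw [not_le, and_iff_right_of_imp fun h => hab.trans h.le]
  rw [← card_filter_add_card_filter_not (s := {j ∈ s | a ≤ e j}) (fun j => e j ≤ b),
    filter_filter, filter_filter, hgt]

end Counting

section Move

variable {ι κ M : Type*} [DecidableEq ι]

/-- The minimum-leftward (MLW) move on block sizes `d`, passing one unit from the block at `q` to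
the block at `p`. The subtraction is truncated, so a unit is actually passed only if `d q ≠ 0`. -/
def mlwMove (d : ι → ℕ) (p q : ι) : ι → ℕ :=
  Function.update (Function.update d q (d q - 1)) p (d p + 1)

variable [Fintype ι] [Fintype κ] [AddCommMonoid M]

theorem sum_comp_mlwMove_add (f : ℕ → M) (d : ι → ℕ) {p q : ι} (hpq : p ≠ q) :
    ∑ i, f (mlwMove d p q i) + (f (d p) + f (d q)) =
      ∑ i, f (d i) + (f (d p + 1) + f (d q - 1)) := by
  have hp := sum_comp_update_add f (Function.update d q (d q - 1)) p (d p + 1)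
  have hq := sum_comp_update_add f d q (d q - 1)
  rw [Function.update_of_ne hpq] at hp
  rw [mlwMove, ← add_assoc, hp, add_right_comm, hq, add_assoc, add_comm (f (d q - 1))]

theorem sum_min_mlwMove_add_card (d : ι → ℕ) (e : κ → ℕ) {p q : ι} (hpq : p ≠ q)
    (hle : d q ≤ d p) (hq : 1 ≤ d q) :
    ∑ i, ∑ j, min (mlwMove d p q i) (e j) + #{j | d q ≤ e j ∧ e j ≤ d p} =
      ∑ i, ∑ j, min (d i) (e j) := by
  have hmove := sum_comp_mlwMove_add (fun t => ∑ j, min t (e j)) d hpq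
  have hgain := sum_min_add_one univ e (d p)
  have hloss : ∑ j, min (d q) (e j) = ∑ j, min (d q - 1) (e j) + #{j | d q ≤ e j} := by
    simpa only [Nat.sub_add_cancel hq, Nat.sub_lt_iff_lt_add hq, Nat.lt_add_one_iff] using
      sum_min_add_one univ e (d q - 1)
  have hnet := card_filter_le_eq_add_card_filter_lt univ e hle
  omega

theorem mlw_sum_lt_general (d : ι → ℕ) (e : κ → ℕ) {p q : ι} (hpq : p ≠ q)
    (hle : d q ≤ d p) (hq : 1 ≤ d q) :
    ∑ i, ∑ j, min (mlwMove d p q i) (e j) < ∑ i, ∑ j, min (d i) (e j) ↔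
      ∃ j, d q ≤ e j ∧ e j ≤ d p := by
  rw [← sum_min_mlwMove_add_card d e hpq hle hq, lt_add_iff_pos_right, card_pos,
    filter_nonempty_iff]
  simp only [mem_univ, true_and]

end Move

/-- **MLW move strictly decreases the kernel count when a block of matching size is
present.** Given antitone block sizes `d₁ ≥ … ≥ d_m`, block sizes `e₁, …, e_ℓ`,
indices `p < q` with `d_p = d_{p+1} = … = d_{q−1} ≥ d_q ≥ 1`, the MLW-perturbed sizes
`d'_p = d_p + 1`, `d'_q = d_q − 1`, `d'_i = d_i` otherwise, and an index `j` with
`d_p ≥ e_j ≥ d_q`, the sum `∑ᵢ∑ⱼ min(d'ᵢ, eⱼ)` is strictly smaller than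
`∑ᵢ∑ⱼ min(dᵢ, eⱼ)`. -/
theorem mlw_sum_lt {m ℓ : ℕ} (hm : 1 ≤ m) (hℓ : 1 ≤ ℓ)
    (d : Fin m → ℕ) (hd : Antitone d) (e : Fin ℓ → ℕ)
    (p q : Fin m) (hpq : p < q)
    (hplateau : ∀ i : Fin m, p ≤ i → i < q → d i = d p)
    (hq1 : 1 ≤ d q)
    (d' : Fin m → ℕ)
    (hd' : ∀ i : Fin m, d' i = if i = p then d p + 1 else if i = q then d q - 1 else d i)
    (hj : ∃ j : Fin ℓ, d q ≤ e j ∧ e j ≤ d p) :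
    ∑ i : Fin m, ∑ j : Fin ℓ, min (d' i) (e j) <
      ∑ i : Fin m, ∑ j : Fin ℓ, min (d i) (e j) := by
  obtain rfl : d' = mlwMove d p q :=
    funext fun i => by simp only [hd', mlwMove, Function.update_apply]
  exact (mlw_sum_lt_general d e hpq.ne (hd hpq.le) hq1).2 hj
end

section
/- Let W₁, W₂ be regular bivariate matrix pencils and let (λ₀,μ₀) ∈ ℂ² be a finite eigenvalue of the two-parameter problem. Then there exists an angle φ ∈ [0, 2π) such that, for the rotated problem with matrices Ã_i = A_i, B̃_i = (cos φ)B_i + (sin φ)C_i, C̃_i = −(sin φ)B_i + (cos φ)C_i (i = 1,2) and the rotated point (λ̃₀, μ̃₀) = ((cos φ)λ₀ + (sin φ)μ₀, −(sin φ)λ₀ + (cos φ)μ₀), the point (λ̃₀, μ̃₀) is a finite eigenvalue of the rotated two-parameter problem and the genericity conditions (1)–(6) hold at (λ̃₀, μ̃₀) for the rotated problem. -/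
open Matrix Kronecker

noncomputable section

def vkron {n₁ n₂ : ℕ} (x : Fin n₁ → ℂ) (y : Fin n₂ → ℂ) : Fin n₁ × Fin n₂ → ℂ :=
  fun p => x p.1 * y p.2

def GKer {N : Type*} [Fintype N] (A B : Matrix N N ℂ) (ξ : ℂ) :
    Submodule ℂ (N → ℂ) :=
  Submodule.span ℂ {v | ∃ p : N → Polynomial ℂ,
    (∀ t : ℂ, (A - t • B).mulVec (fun i => (p i).eval t) = 0) ∧
    v = fun i => (p i).eval ξ}

def RedMin {N : Type*} [Fintype N] (A B : Matrix N N ℂ) : Submodule ℂ (N → ℂ) :=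
  Submodule.span ℂ (⋃ ξ : ℂ, (GKer A B ξ : Set (N → ℂ)))

def nrank {N : Type*} [Fintype N] (A B : Matrix N N ℂ) : ℕ :=
  ⨆ ξ : ℂ, (A - ξ • B).rank

def Wmat {n : ℕ} (A B C : Matrix (Fin n) (Fin n) ℂ) (l m : ℂ) :
    Matrix (Fin n) (Fin n) ℂ := A + l • B + m • C

def charPoly {n : ℕ} (A B C : Matrix (Fin n) (Fin n) ℂ) : MvPolynomial (Fin 2) ℂ :=
  Matrix.det (Matrix.of fun i j =>
    MvPolynomial.C (A i j) + MvPolynomial.X 0 * MvPolynomial.C (B i j)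
      + MvPolynomial.X 1 * MvPolynomial.C (C i j))

def ev2 (p : MvPolynomial (Fin 2) ℂ) (l m : ℂ) : ℂ := MvPolynomial.eval ![l, m] p

def Delta0 {n₁ n₂ : ℕ} (B₁ C₁ : Matrix (Fin n₁) (Fin n₁) ℂ)
    (B₂ C₂ : Matrix (Fin n₂) (Fin n₂) ℂ) :
    Matrix (Fin n₁ × Fin n₂) (Fin n₁ × Fin n₂) ℂ :=
  B₁ ⊗ₖ C₂ - C₁ ⊗ₖ B₂

def Delta1 {n₁ n₂ : ℕ} (A₁ C₁ : Matrix (Fin n₁) (Fin n₁) ℂ)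
    (A₂ C₂ : Matrix (Fin n₂) (Fin n₂) ℂ) :
    Matrix (Fin n₁ × Fin n₂) (Fin n₁ × Fin n₂) ℂ :=
  C₁ ⊗ₖ A₂ - A₁ ⊗ₖ C₂

def Delta2 {n₁ n₂ : ℕ} (A₁ B₁ : Matrix (Fin n₁) (Fin n₁) ℂ)
    (A₂ B₂ : Matrix (Fin n₂) (Fin n₂) ℂ) :
    Matrix (Fin n₁ × Fin n₂) (Fin n₁ × Fin n₂) ℂ :=
  A₁ ⊗ₖ B₂ - B₁ ⊗ₖ A₂

/-- `(λ₀,μ₀)` is a finite eigenvalue of the two-parameter problem. -/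
def IsFiniteEigW {n₁ n₂ : ℕ}
    (A₁ B₁ C₁ : Matrix (Fin n₁) (Fin n₁) ℂ) (A₂ B₂ C₂ : Matrix (Fin n₂) (Fin n₂) ℂ)
    (l₀ m₀ : ℂ) : Prop :=
  (∀ q : MvPolynomial (Fin 2) ℂ,
      q ∣ charPoly A₁ B₁ C₁ → q ∣ charPoly A₂ B₂ C₂ →
      (¬ ∃ c : ℂ, q = MvPolynomial.C c) → ev2 q l₀ m₀ ≠ 0) ∧
  (∃ x₁ : Fin n₁ → ℂ, x₁ ≠ 0 ∧ (Wmat A₁ B₁ C₁ l₀ m₀).mulVec x₁ = 0) ∧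
  (∃ x₂ : Fin n₂ → ℂ, x₂ ≠ 0 ∧ (Wmat A₂ B₂ C₂ l₀ m₀).mulVec x₂ = 0)

/-- `(λ₀,μ₀)` is a finite eigenvalue of the pair of pencils
`(Δ₁ − λΔ₀, Δ₂ − μΔ₀)`. -/
def IsFiniteEigDelta {n₁ n₂ : ℕ}
    (A₁ B₁ C₁ : Matrix (Fin n₁) (Fin n₁) ℂ) (A₂ B₂ C₂ : Matrix (Fin n₂) (Fin n₂) ℂ)
    (l₀ m₀ : ℂ) : Prop :=
  (Delta1 A₁ C₁ A₂ C₂ - l₀ • Delta0 B₁ C₁ B₂ C₂).rank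
      < nrank (Delta1 A₁ C₁ A₂ C₂) (Delta0 B₁ C₁ B₂ C₂) ∧
  (Delta2 A₁ B₁ A₂ B₂ - m₀ • Delta0 B₁ C₁ B₂ C₂).rank
      < nrank (Delta2 A₁ B₁ A₂ B₂) (Delta0 B₁ C₁ B₂ C₂) ∧
  ∃ z : Fin n₁ × Fin n₂ → ℂ, z ≠ 0 ∧
    (Delta1 A₁ C₁ A₂ C₂).mulVec z = l₀ • (Delta0 B₁ C₁ B₂ C₂).mulVec z ∧
    (Delta2 A₁ B₁ A₂ B₂).mulVec z = m₀ • (Delta0 B₁ C₁ B₂ C₂).mulVec z ∧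
    z ∉ RedMin (Delta1 A₁ C₁ A₂ C₂) (Delta0 B₁ C₁ B₂ C₂) ∧
    z ∉ RedMin (Delta2 A₁ B₁ A₂ B₂) (Delta0 B₁ C₁ B₂ C₂)

/-- Genericity conditions (1)–(6) at `(λ₀,μ₀)`. -/
def Generic {n₁ n₂ : ℕ}
    (A₁ B₁ C₁ : Matrix (Fin n₁) (Fin n₁) ℂ) (A₂ B₂ C₂ : Matrix (Fin n₂) (Fin n₂) ℂ)
    (l₀ m₀ : ℂ) : Prop :=
  -- (1) the univariate polynomial `γ ↦ pᵢ(λ₀,γ)` is not identically zero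
  (∃ γ : ℂ, ev2 (charPoly A₁ B₁ C₁) l₀ γ ≠ 0) ∧
  (∃ γ : ℂ, ev2 (charPoly A₂ B₂ C₂) l₀ γ ≠ 0) ∧
  -- (2) the univariate polynomial `β ↦ pᵢ(β,μ₀)` is not identically zero
  (∃ β : ℂ, ev2 (charPoly A₁ B₁ C₁) β m₀ ≠ 0) ∧
  (∃ β : ℂ, ev2 (charPoly A₂ B₂ C₂) β m₀ ≠ 0) ∧
  -- (3)
  (∃ ε > (0:ℝ), ∀ η : ℂ, η ≠ l₀ → ‖η - l₀‖ < ε →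
    (Wmat A₁ B₁ C₁ η m₀).rank = n₁ ∧ (Wmat A₂ B₂ C₂ η m₀).rank = n₂) ∧
  -- (4)
  (∃ ε > (0:ℝ), ∀ θ : ℂ, θ ≠ m₀ → ‖θ - m₀‖ < ε →
    (Wmat A₁ B₁ C₁ l₀ θ).rank = n₁ ∧ (Wmat A₂ B₂ C₂ l₀ θ).rank = n₂) ∧
  -- (5)
  (∀ l₁ m₁ : ℂ, IsFiniteEigW A₁ B₁ C₁ A₂ B₂ C₂ l₁ m₁ → (l₁, m₁) ≠ (l₀, m₀) →
    l₁ ≠ l₀ ∧ m₁ ≠ m₀) ∧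
  -- (6)
  (∃ ε > (0:ℝ), ∀ η θ : ℂ, (η, θ) ≠ (l₀, m₀) → ‖η - l₀‖ + ‖θ - m₀‖ < ε →
    (Wmat A₁ B₁ C₁ l₀ m₀).rank + (Wmat A₂ B₂ C₂ l₀ m₀).rank <
    (Wmat A₁ B₁ C₁ η θ).rank + (Wmat A₂ B₂ C₂ η θ).rank)

/-!
In the rotated coordinates the lines `λ̃ = λ̃₀` and `μ̃ = μ̃₀` are the lines through `(λ₀, μ₀)` with
directions `(-sin φ, cos φ)` and `(cos φ, sin φ)`. Conditions (1), (2) and (5) say that neither `p₁`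
nor `p₂` vanishes identically on these two lines and that the lines carry no other finite
eigenvalue. A nonzero polynomial vanishes on finitely many lines through a given point, and there
are finitely many finite eigenvalues: once a greatest common divisor of `p₁` and `p₂` is divided
out, two relatively prime polynomials remain, and the ideal they generate in the two-dimensional
factorial ring `ℂ[λ, μ]` has height at least two, so only finitely many primes contain it. Hence all
but finitely many angles are suitable. Conditions (3) and (4) follow from (2) and (1), and (6) holds
at every finite eigenvalue: the zeros of the greatest common divisor stay away from it, so it is an
isolated common zero of `p₁` and `p₂`, while the rank is lower semicontinuous.
-/

open Filter Topology

section RelativelyPrime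

variable {R : Type*} [CommRing R] [IsDomain R] [UniqueFactorizationMonoid R]

theorem two_le_height_span_pair_of_isRelPrime {a b : R} (hab : IsRelPrime a b) :
    2 ≤ (Ideal.span {a, b}).height := by
  rw [Ideal.height_eq_inf_minimalPrimes]
  refine le_iInf₂ fun P hP => ?_
  have hprime : P.IsPrime := hP.isPrime
  by_contra! hlt
  have hprincipal : P.IsPrincipal := by
    obtain h0 | h1 : P.height = 0 ∨ P.height = 1 := by
      rw [← Order.lt_one_iff, ← le_iff_lt_or_eq]
      exact Order.le_of_lt_add_one (by simpa [one_add_one_eq_two] using hlt)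
    · exact Ideal.height_eq_zero_iff_eq_bot.1 h0 ▸ bot_isPrincipal
    · exact UniqueFactorizationMonoid.isPrincipal_of_height_eq_one h1
  obtain ⟨g, rfl⟩ := hprincipal
  have hga : g ∣ a := Ideal.mem_span_singleton.1 (hP.le (Ideal.subset_span (by simp)))
  have hgb : g ∣ b := Ideal.mem_span_singleton.1 (hP.le (Ideal.subset_span (by simp)))
  exact hprime.ne_top (Ideal.span_singleton_eq_top.2 (hab hga hgb))

theorem finite_setOf_isPrime_mem_of_isRelPrime [IsNoetherianRing R] (hdim : ringKrullDim R ≤ 2)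
    {a b : R} (hab : IsRelPrime a b) : {P : Ideal R | P.IsPrime ∧ a ∈ P ∧ b ∈ P}.Finite := by
  refine (Ideal.span {a, b}).finite_minimalPrimes_of_isNoetherianRing.subset ?_
  rintro P ⟨hprime, ha, hb⟩
  have hP : P.height ≤ 2 :=
    WithBot.coe_le_coe.1 (Ideal.height_le_ringKrullDim_of_isPrime.trans hdim)
  have hle : Ideal.span {a, b} ≤ P := by simp [Ideal.span_le, Set.insert_subset_iff, ha, hb]
  exact Ideal.mem_minimalPrimes_of_height_le hle
    (hP.trans (two_le_height_span_pair_of_isRelPrime hab))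

end RelativelyPrime

section Zeros

open MvPolynomial

theorem ker_eval_injective (σ R : Type*) [CommRing R] :
    Function.Injective fun x : σ → R => RingHom.ker (eval x) := by
  intro x y (hxy : RingHom.ker (eval x) = RingHom.ker (eval y))
  funext i
  have hi : X i - C (x i) ∈ RingHom.ker (eval x) := by simp [RingHom.mem_ker]
  rw [hxy, RingHom.mem_ker, map_sub, eval_X, eval_C, sub_eq_zero] at hi
  exact hi.symm

theorem eval_aeval_polynomial {σ R : Type*} [CommSemiring R] (f : σ → Polynomial R)
    (p : MvPolynomial σ R) (t : R) :
    (aeval f p).eval t = eval (fun i => (f i).eval t) p := by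
  simpa [MvPolynomial.aeval_eq_eval] using
    comp_aeval_apply (Polynomial.aeval t) (f := f) (p := p)

theorem finite_setOf_eval_polynomial_eq_zero {σ R : Type*} [CommRing R] [IsDomain R]
    {p : MvPolynomial σ R} {f : σ → Polynomial R} {t₀ : R}
    (h : eval (fun i => (f i).eval t₀) p ≠ 0) :
    {t | eval (fun i => (f i).eval t) p = 0}.Finite := by
  simp only [← eval_aeval_polynomial] at h ⊢
  exact Polynomial.finite_setOfPred_isRoot fun h0 => h (by simp [h0])

variable {K : Type*} [Field K]

theorem finite_common_zeros_of_isRelPrime {p q : MvPolynomial (Fin 2) K} (hpq : IsRelPrime p q) :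
    {x | eval x p = 0 ∧ eval x q = 0}.Finite := by
  have hdim : ringKrullDim (MvPolynomial (Fin 2) K) ≤ 2 := by
    simp [ringKrullDim_of_isNoetherianRing]
  refine ((finite_setOf_isPrime_mem_of_isRelPrime hdim hpq).preimage
    (ker_eval_injective (Fin 2) K).injOn).subset ?_
  exact fun x hx => ⟨RingHom.ker_isPrime _, hx⟩

theorem exists_dvd_finite_common_zeros {p : MvPolynomial (Fin 2) K} (hp : p ≠ 0)
    (q : MvPolynomial (Fin 2) K) :
    ∃ g, g ∣ p ∧ g ∣ q ∧ {x | eval x p = 0 ∧ eval x q = 0 ∧ eval x g ≠ 0}.Finite := by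
  obtain ⟨p', q', g, hrel, rfl, rfl⟩ := UniqueFactorizationMonoid.exists_reduced_factors p hp q
  refine ⟨g, dvd_mul_right _ _, dvd_mul_right _ _, ?_⟩
  refine (finite_common_zeros_of_isRelPrime hrel).subset ?_
  rintro x ⟨hxp, hxq, hxg⟩
  simp only [map_mul, mul_eq_zero, hxg, false_or] at hxp hxq
  exact ⟨hxp, hxq⟩

theorem finite_setOf_forall_eval_line_eq_zero [Infinite K] {p : MvPolynomial (Fin 2) K}
    (hp : p ≠ 0) (l m : K) : {t | ∀ x, eval ![l + x, m + x * t] p = 0}.Finite := by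
  have hX : (X 0 - C l : MvPolynomial (Fin 2) K) ≠ 0 := fun h => by
    simpa using congrArg (eval ![l + 1, 0]) h
  obtain ⟨y, hy⟩ : ∃ y, eval y (p * (X 0 - C l)) ≠ 0 := by
    by_contra! h
    exact mul_ne_zero hp hX (funext fun y => by simp [h y])
  rw [map_mul, mul_ne_zero_iff] at hy
  obtain ⟨hyp, hyl⟩ := hy
  replace hyl : y 0 - l ≠ 0 := by simpa using hyl
  let f : Fin 2 → Polynomial K :=
    ![.C (y 0), .C m + .C (y 0 - l) * .X]
  have hf : ∀ t, (fun i => (f i).eval t) = ![y 0, m + (y 0 - l) * t] := fun t => by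
    ext i; fin_cases i <;> simp [f]
  have hy_mem : (fun i => (f i).eval ((y 1 - m) / (y 0 - l))) = y := by
    rw [hf, mul_div_cancel₀ _ hyl]
    ext i; fin_cases i <;> simp
  refine (finite_setOf_eval_polynomial_eq_zero (f := f) (hy_mem ▸ hyp)).subset fun t ht => ?_
  simpa [hf] using ht (y 0 - l)

end Zeros

section Rank

theorem rank_eq_card_iff_det_ne_zero {n K : Type*} [Fintype n] [DecidableEq n] [Field K]
    (M : Matrix n n K) : M.rank = Fintype.card n ↔ M.det ≠ 0 := by
  rw [Matrix.rank_eq_finrank_span_cols, eq_comm, ← Set.finrank,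
    ← linearIndependent_iff_card_eq_finrank_span, Matrix.linearIndependent_cols_iff_isUnit,
    Matrix.isUnit_iff_isUnit_det, isUnit_iff_ne_zero]

theorem eventually_rank_le_rank {m n 𝕜 : Type*} [Finite m] [Fintype n]
    [NontriviallyNormedField 𝕜] [CompleteSpace 𝕜] (M : Matrix m n 𝕜) :
    ∀ᶠ N in 𝓝 M, M.rank ≤ N.rank := by
  classical
  have := Fintype.ofFinite m
  let L : Matrix m n 𝕜 →ₗ[𝕜] (n → 𝕜) →L[𝕜] (m → 𝕜) :=
    LinearMap.toContinuousLinearMap.toLinearMap ∘ₗ Matrix.toLin'.toLinearMap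
  have hL : Continuous L := LinearMap.continuous_of_finiteDimensional L
  have hrank : ∀ N, (L N : (n → 𝕜) →ₗ[𝕜] (m → 𝕜)).rank = N.rank := fun N => by
    rw [Matrix.rank, Module.finrank_eq_rank]
    rfl
  have hopen : IsOpen {N | (M.rank : Cardinal) ≤ (L N : (n → 𝕜) →ₗ[𝕜] (m → 𝕜)).rank} :=
    (isOpen_setOfPred_nat_le_rank M.rank).preimage hL
  filter_upwards [hopen.mem_nhds (hrank M).ge] with N hN
  have hN' : (M.rank : Cardinal) ≤ (L N : (n → 𝕜) →ₗ[𝕜] (m → 𝕜)).rank := hN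
  exact_mod_cast hN'.trans_eq (hrank N)

end Rank

section NhdsNE

variable {E F : Type*} [SeminormedAddCommGroup E] [SeminormedAddCommGroup F]

theorem exists_pos_forall_of_eventually_nhdsNE {a : E} {p : E → Prop} (h : ∀ᶠ z in 𝓝[≠] a, p z) :
    ∃ ε > (0 : ℝ), ∀ z, z ≠ a → ‖z - a‖ < ε → p z := by
  obtain ⟨ε, hε, hp⟩ := Metric.eventually_nhds_iff.1 (eventually_nhdsWithin_iff.1 h)
  exact ⟨ε, hε, fun z hne hz => hp (by rwa [dist_eq_norm]) hne⟩

theorem exists_pos_forall_of_eventually_nhdsNE_prod {a : E} {b : F} {p : E × F → Prop}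
    (h : ∀ᶠ P in 𝓝[≠] (a, b), p P) :
    ∃ ε > (0 : ℝ), ∀ z w, (z, w) ≠ (a, b) → ‖z - a‖ + ‖w - b‖ < ε → p (z, w) := by
  obtain ⟨ε, hε, hp⟩ := exists_pos_forall_of_eventually_nhdsNE h
  refine ⟨ε, hε, fun z w hne hlt => hp (z, w) hne ?_⟩
  rw [Prod.mk_sub_mk, Prod.norm_mk]
  exact (max_le_add_of_nonneg (norm_nonneg _) (norm_nonneg _)).trans_lt hlt

end NhdsNE

section Pencil

variable {n : ℕ} (A B C : Matrix (Fin n) (Fin n) ℂ) (l m : ℂ)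

theorem ev2_charPoly : ev2 (charPoly A B C) l m = (Wmat A B C l m).det := by
  rw [ev2, charPoly, Wmat, RingHom.map_det]
  congr 1
  ext i j
  simp

theorem rank_Wmat_eq_iff : (Wmat A B C l m).rank = n ↔ ev2 (charPoly A B C) l m ≠ 0 := by
  simpa only [ev2_charPoly, Fintype.card_fin] using rank_eq_card_iff_det_ne_zero (Wmat A B C l m)

theorem rank_Wmat_lt_iff : (Wmat A B C l m).rank < n ↔ ev2 (charPoly A B C) l m = 0 := by
  rw [(Matrix.rank_le_width _).lt_iff_ne, Ne, rank_Wmat_eq_iff, not_not]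

theorem exists_mulVec_Wmat_eq_zero_iff :
    (∃ x, x ≠ 0 ∧ (Wmat A B C l m).mulVec x = 0) ↔ ev2 (charPoly A B C) l m = 0 := by
  rw [ev2_charPoly, Matrix.exists_mulVec_eq_zero_iff]

theorem eventually_rank_Wmat_le :
    ∀ᶠ P : ℂ × ℂ in 𝓝 (l, m), (Wmat A B C l m).rank ≤ (Wmat A B C P.1 P.2).rank := by
  have hW : Continuous fun P : ℂ × ℂ => Wmat A B C P.1 P.2 := by
    unfold Wmat
    fun_prop
  exact (hW.tendsto (l, m)).eventually (eventually_rank_le_rank (Wmat A B C l m))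

variable {A B C l m}

theorem eventually_rank_Wmat_eq_fst (h : ∃ β, ev2 (charPoly A B C) β m ≠ 0) :
    ∀ᶠ η in 𝓝[≠] l, (Wmat A B C η m).rank = n := by
  obtain ⟨β, hβ⟩ := h
  let f : Fin 2 → Polynomial ℂ := ![.X, .C m]
  have hf : ∀ t, (fun i => (f i).eval t) = ![t, m] := fun t => by
    ext i; fin_cases i <;> simp [f]
  have hfin := finite_setOf_eval_polynomial_eq_zero (f := f) (t₀ := β) (by rwa [hf])
  filter_upwards [nhdsNE_le_cofinite l hfin.eventually_cofinite_notMem] with η hη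
  exact (rank_Wmat_eq_iff A B C η m).2 fun h0 => hη (by simpa [hf, ev2] using h0)

theorem eventually_rank_Wmat_eq_snd (h : ∃ γ, ev2 (charPoly A B C) l γ ≠ 0) :
    ∀ᶠ θ in 𝓝[≠] m, (Wmat A B C l θ).rank = n := by
  obtain ⟨γ, hγ⟩ := h
  let f : Fin 2 → Polynomial ℂ := ![.C l, .X]
  have hf : ∀ t, (fun i => (f i).eval t) = ![l, t] := fun t => by
    ext i; fin_cases i <;> simp [f]
  have hfin := finite_setOf_eval_polynomial_eq_zero (f := f) (t₀ := γ) (by rwa [hf])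
  filter_upwards [nhdsNE_le_cofinite m hfin.eventually_cofinite_notMem] with θ hθ
  exact (rank_Wmat_eq_iff A B C l θ).2 fun h0 => hθ (by simpa [hf, ev2] using h0)

end Pencil

theorem continuous_ev2 (p : MvPolynomial (Fin 2) ℂ) :
    Continuous fun P : ℂ × ℂ => ev2 p P.1 P.2 :=
  (MvPolynomial.continuous_eval p).comp (by fun_prop)

theorem ev2_ext {p q : MvPolynomial (Fin 2) ℂ} (h : ∀ l m, ev2 p l m = ev2 q l m) : p = q :=
  MvPolynomial.funext fun x => by
    have hx : x = ![x 0, x 1] := by ext i; fin_cases i <;> rfl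
    rw [hx]
    exact h _ _

section TwoParameter

variable {n₁ n₂ : ℕ} {A₁ B₁ C₁ : Matrix (Fin n₁) (Fin n₁) ℂ}
  {A₂ B₂ C₂ : Matrix (Fin n₂) (Fin n₂) ℂ} {l₀ m₀ : ℂ}

theorem IsFiniteEigW.ev2_charPoly_left (heig : IsFiniteEigW A₁ B₁ C₁ A₂ B₂ C₂ l₀ m₀) :
    ev2 (charPoly A₁ B₁ C₁) l₀ m₀ = 0 :=
  (exists_mulVec_Wmat_eq_zero_iff A₁ B₁ C₁ l₀ m₀).1 heig.2.1

theorem IsFiniteEigW.ev2_charPoly_right (heig : IsFiniteEigW A₁ B₁ C₁ A₂ B₂ C₂ l₀ m₀) :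
    ev2 (charPoly A₂ B₂ C₂) l₀ m₀ = 0 :=
  (exists_mulVec_Wmat_eq_zero_iff A₂ B₂ C₂ l₀ m₀).1 heig.2.2

theorem IsFiniteEigW.ev2_ne_zero_of_dvd (heig : IsFiniteEigW A₁ B₁ C₁ A₂ B₂ C₂ l₀ m₀)
    {g : MvPolynomial (Fin 2) ℂ} (hg : g ≠ 0) (hg₁ : g ∣ charPoly A₁ B₁ C₁)
    (hg₂ : g ∣ charPoly A₂ B₂ C₂) : ev2 g l₀ m₀ ≠ 0 := by
  by_cases hconst : ∃ c : ℂ, g = MvPolynomial.C c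
  · obtain ⟨c, rfl⟩ := hconst
    simpa [ev2] using hg
  · exact heig.1 g hg₁ hg₂ hconst

theorem exists_dvd_charPoly_finite_common_zeros (hreg₁ : charPoly A₁ B₁ C₁ ≠ 0)
    (A₂ B₂ C₂ : Matrix (Fin n₂) (Fin n₂) ℂ) :
    ∃ g, g ≠ 0 ∧ g ∣ charPoly A₁ B₁ C₁ ∧ g ∣ charPoly A₂ B₂ C₂ ∧
      {P : ℂ × ℂ | ev2 (charPoly A₁ B₁ C₁) P.1 P.2 = 0 ∧ ev2 (charPoly A₂ B₂ C₂) P.1 P.2 = 0 ∧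
        ev2 g P.1 P.2 ≠ 0}.Finite := by
  obtain ⟨g, hg₁, hg₂, hfin⟩ := exists_dvd_finite_common_zeros hreg₁ (charPoly A₂ B₂ C₂)
  exact ⟨g, ne_zero_of_dvd_ne_zero hreg₁ hg₁, hg₁, hg₂,
    hfin.preimage (finTwoArrowEquiv ℂ).symm.injective.injOn⟩

theorem finite_setOf_isFiniteEigW (hreg₁ : charPoly A₁ B₁ C₁ ≠ 0)
    (A₂ B₂ C₂ : Matrix (Fin n₂) (Fin n₂) ℂ) :
    {P : ℂ × ℂ | IsFiniteEigW A₁ B₁ C₁ A₂ B₂ C₂ P.1 P.2}.Finite := by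
  obtain ⟨g, hg, hg₁, hg₂, hfin⟩ := exists_dvd_charPoly_finite_common_zeros hreg₁ A₂ B₂ C₂
  exact hfin.subset fun P hP =>
    ⟨hP.ev2_charPoly_left, hP.ev2_charPoly_right, hP.ev2_ne_zero_of_dvd hg hg₁ hg₂⟩

theorem IsFiniteEigW.eventually_ev2_charPoly_ne_zero (hreg₁ : charPoly A₁ B₁ C₁ ≠ 0)
    (heig : IsFiniteEigW A₁ B₁ C₁ A₂ B₂ C₂ l₀ m₀) :
    ∀ᶠ P : ℂ × ℂ in 𝓝[≠] (l₀, m₀),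
      ev2 (charPoly A₁ B₁ C₁) P.1 P.2 ≠ 0 ∨ ev2 (charPoly A₂ B₂ C₂) P.1 P.2 ≠ 0 := by
  obtain ⟨g, hg, hg₁, hg₂, hfin⟩ := exists_dvd_charPoly_finite_common_zeros hreg₁ A₂ B₂ C₂
  have hgP : ∀ᶠ P : ℂ × ℂ in 𝓝 (l₀, m₀), ev2 g P.1 P.2 ≠ 0 :=
    (continuous_ev2 g).continuousAt.eventually_ne (heig.ev2_ne_zero_of_dvd hg hg₁ hg₂)
  filter_upwards [nhdsWithin_le_nhds hgP,
    nhdsNE_le_cofinite _ hfin.eventually_cofinite_notMem] with P hPg hP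
  by_contra! h
  exact hP ⟨h.1, h.2, hPg⟩

theorem IsFiniteEigW.eventually_rank_add_rank_lt (hreg₁ : charPoly A₁ B₁ C₁ ≠ 0)
    (heig : IsFiniteEigW A₁ B₁ C₁ A₂ B₂ C₂ l₀ m₀) :
    ∀ᶠ P : ℂ × ℂ in 𝓝[≠] (l₀, m₀),
      (Wmat A₁ B₁ C₁ l₀ m₀).rank + (Wmat A₂ B₂ C₂ l₀ m₀).rank <
        (Wmat A₁ B₁ C₁ P.1 P.2).rank + (Wmat A₂ B₂ C₂ P.1 P.2).rank := by
  have hlt₁ := (rank_Wmat_lt_iff A₁ B₁ C₁ l₀ m₀).2 heig.ev2_charPoly_left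
  have hlt₂ := (rank_Wmat_lt_iff A₂ B₂ C₂ l₀ m₀).2 heig.ev2_charPoly_right
  filter_upwards [heig.eventually_ev2_charPoly_ne_zero hreg₁,
    nhdsWithin_le_nhds (eventually_rank_Wmat_le A₁ B₁ C₁ l₀ m₀),
    nhdsWithin_le_nhds (eventually_rank_Wmat_le A₂ B₂ C₂ l₀ m₀)] with P hP hle₁ hle₂
  simp only [← rank_Wmat_eq_iff] at hP
  omega

/-- The line through `(l₀, m₀)` with direction `(u, v)` is generic: neither characteristic
polynomial vanishes identically on it, and it meets the finite eigenvalues at most in `(l₀, m₀)`.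
For the directions `(0, 1)` and `(1, 0)` these are conditions (1), (2) and (5). The direction is
meant to be nonzero. -/
structure IsGenericDirection (A₁ B₁ C₁ : Matrix (Fin n₁) (Fin n₁) ℂ)
    (A₂ B₂ C₂ : Matrix (Fin n₂) (Fin n₂) ℂ) (l₀ m₀ u v : ℂ) : Prop where
  ev2_left : ∃ x, ev2 (charPoly A₁ B₁ C₁) (l₀ + x * u) (m₀ + x * v) ≠ 0
  ev2_right : ∃ x, ev2 (charPoly A₂ B₂ C₂) (l₀ + x * u) (m₀ + x * v) ≠ 0
  eq_zero_of_isFiniteEigW :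
    ∀ x, IsFiniteEigW A₁ B₁ C₁ A₂ B₂ C₂ (l₀ + x * u) (m₀ + x * v) → x = 0

theorem finite_setOf_not_isGenericDirection (hreg₁ : charPoly A₁ B₁ C₁ ≠ 0)
    (hreg₂ : charPoly A₂ B₂ C₂ ≠ 0) (l₀ m₀ : ℂ) :
    {t | ¬ IsGenericDirection A₁ B₁ C₁ A₂ B₂ C₂ l₀ m₀ 1 t}.Finite := by
  refine (((finite_setOf_forall_eval_line_eq_zero hreg₁ l₀ m₀).union
    (finite_setOf_forall_eval_line_eq_zero hreg₂ l₀ m₀)).union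
    ((finite_setOf_isFiniteEigW hreg₁ A₂ B₂ C₂).image
      fun P => (P.2 - m₀) / (P.1 - l₀))).subset fun t ht => ?_
  contrapose! ht
  simp only [Set.mem_union, Set.mem_ofPred_eq, not_or, not_forall] at ht
  obtain ⟨⟨h₁, h₂⟩, h₃⟩ := ht
  refine not_not.2 ⟨by simpa [ev2] using h₁, by simpa [ev2] using h₂, fun x hx => ?_⟩
  by_contra hx0
  exact h₃ ⟨(l₀ + x * 1, m₀ + x * t), hx, by simp [mul_div_cancel_left₀ t hx0]⟩

theorem IsGenericDirection.of_slope {u v : ℂ} (hu : u ≠ 0)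
    (h : IsGenericDirection A₁ B₁ C₁ A₂ B₂ C₂ l₀ m₀ 1 (v / u)) :
    IsGenericDirection A₁ B₁ C₁ A₂ B₂ C₂ l₀ m₀ u v := by
  obtain ⟨⟨x₁, hx₁⟩, ⟨x₂, hx₂⟩, heig⟩ := h
  refine ⟨⟨x₁ / u, ?_⟩, ⟨x₂ / u, ?_⟩, fun x hx => ?_⟩
  · convert hx₁ using 2 <;> field_simp
  · convert hx₂ using 2 <;> field_simp
  · refine (mul_eq_zero.1 (heig (x * u) ?_)).resolve_right hu
    convert hx using 1 <;> field_simp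

theorem IsFiniteEigW.generic (heig : IsFiniteEigW A₁ B₁ C₁ A₂ B₂ C₂ l₀ m₀)
    (hvert : IsGenericDirection A₁ B₁ C₁ A₂ B₂ C₂ l₀ m₀ 0 1)
    (hhor : IsGenericDirection A₁ B₁ C₁ A₂ B₂ C₂ l₀ m₀ 1 0) :
    Generic A₁ B₁ C₁ A₂ B₂ C₂ l₀ m₀ := by
  obtain ⟨⟨x₁, hx₁⟩, ⟨x₂, hx₂⟩, hx⟩ := hvert
  obtain ⟨⟨y₁, hy₁⟩, ⟨y₂, hy₂⟩, hy⟩ := hhor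
  simp only [mul_zero, mul_one, add_zero] at hx₁ hx₂ hx hy₁ hy₂ hy
  have hreg₁ : charPoly A₁ B₁ C₁ ≠ 0 := fun h => hx₁ (by simp [h, ev2])
  refine ⟨⟨_, hx₁⟩, ⟨_, hx₂⟩, ⟨_, hy₁⟩, ⟨_, hy₂⟩, ?_, ?_, fun l m hlm hne => ⟨?_, ?_⟩, ?_⟩
  · exact exists_pos_forall_of_eventually_nhdsNE
      ((eventually_rank_Wmat_eq_fst ⟨_, hy₁⟩).and (eventually_rank_Wmat_eq_fst ⟨_, hy₂⟩))
  · exact exists_pos_forall_of_eventually_nhdsNE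
      ((eventually_rank_Wmat_eq_snd ⟨_, hx₁⟩).and (eventually_rank_Wmat_eq_snd ⟨_, hx₂⟩))
  · rintro rfl
    exact hne (by rw [sub_eq_zero.1 (hx (m - m₀) (by simpa using hlm))])
  · rintro rfl
    exact hne (by rw [sub_eq_zero.1 (hy (l - l₀) (by simpa using hlm))])
  · exact exists_pos_forall_of_eventually_nhdsNE_prod (heig.eventually_rank_add_rank_lt hreg₁)

end TwoParameter

section Rotation

open MvPolynomial

/-- The substitution `(λ, μ) ↦ (cλ - sμ, sλ + cμ)` on `ℂ[λ, μ]`, which rotates the parameters when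
`c = cos φ` and `s = sin φ`. -/
def rotationHom (c s : ℂ) : MvPolynomial (Fin 2) ℂ →ₐ[ℂ] MvPolynomial (Fin 2) ℂ :=
  aeval ![C c * X 0 - C s * X 1, C s * X 0 + C c * X 1]

theorem ev2_rotationHom (c s : ℂ) (q : MvPolynomial (Fin 2) ℂ) (l m : ℂ) :
    ev2 (rotationHom c s q) l m = ev2 q (c * l - s * m) (s * l + c * m) := by
  have hcomp : (eval ![l, m]).comp (rotationHom c s).toRingHom =
      eval ![c * l - s * m, s * l + c * m] := by
    ext i
    · simp [rotationHom]
    · fin_cases i <;> simp [rotationHom]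
  exact RingHom.congr_fun hcomp q

variable {c s : ℂ}

theorem rotationHom_comp_rotationHom_neg (h : c ^ 2 + s ^ 2 = 1) :
    (rotationHom c s).comp (rotationHom c (-s)) = AlgHom.id ℂ (MvPolynomial (Fin 2) ℂ) := by
  refine AlgHom.ext fun q => ev2_ext fun l m => ?_
  rw [AlgHom.comp_apply, ev2_rotationHom, ev2_rotationHom, AlgHom.id_apply]
  congr 1
  · linear_combination l * h
  · linear_combination m * h

/-- The substitution `rotationHom c s` as an automorphism of `ℂ[λ, μ]`. Only `c² + s² = 1` matters
for its invertibility, so `c` and `s` may be complex. -/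
def rotationEquiv (c s : ℂ) (h : c ^ 2 + s ^ 2 = 1) :
    MvPolynomial (Fin 2) ℂ ≃ₐ[ℂ] MvPolynomial (Fin 2) ℂ :=
  AlgEquiv.ofAlgHom (rotationHom c s) (rotationHom c (-s)) (rotationHom_comp_rotationHom_neg h)
    (by simpa using rotationHom_comp_rotationHom_neg (c := c) (s := -s) (by rwa [neg_sq]))

variable (h : c ^ 2 + s ^ 2 = 1)

theorem ev2_rotationEquiv (q : MvPolynomial (Fin 2) ℂ) (l m : ℂ) :
    ev2 (rotationEquiv c s h q) l m = ev2 q (c * l - s * m) (s * l + c * m) :=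
  ev2_rotationHom c s q l m

theorem Wmat_rotate {n : ℕ} (A B C : Matrix (Fin n) (Fin n) ℂ) (c s l m : ℂ) :
    Wmat A (c • B + s • C) (-s • B + c • C) l m = Wmat A B C (c * l - s * m) (s * l + c * m) := by
  unfold Wmat
  module

theorem charPoly_rotate {n : ℕ} (A B C : Matrix (Fin n) (Fin n) ℂ) :
    charPoly A (c • B + s • C) (-s • B + c • C) = rotationEquiv c s h (charPoly A B C) :=
  ev2_ext fun l m => by rw [ev2_rotationEquiv, ev2_charPoly, ev2_charPoly, Wmat_rotate]

variable {n₁ n₂ : ℕ} {A₁ B₁ C₁ : Matrix (Fin n₁) (Fin n₁) ℂ}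
  {A₂ B₂ C₂ : Matrix (Fin n₂) (Fin n₂) ℂ} {l₀ m₀ : ℂ}

include h

theorem isFiniteEigW_rotate_iff {l m : ℂ} :
    IsFiniteEigW A₁ (c • B₁ + s • C₁) (-s • B₁ + c • C₁) A₂ (c • B₂ + s • C₂) (-s • B₂ + c • C₂)
      l m ↔ IsFiniteEigW A₁ B₁ C₁ A₂ B₂ C₂ (c * l - s * m) (s * l + c * m) := by
  have hconst (q : MvPolynomial (Fin 2) ℂ) (k : ℂ) : rotationEquiv c s h q = C k ↔ q = C k :=
    (rotationEquiv c s h).injective.eq_iff' ((rotationEquiv c s h).commutes k)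
  rw [IsFiniteEigW, IsFiniteEigW, (rotationEquiv c s h).surjective.forall]
  simp only [charPoly_rotate h, Wmat_rotate, map_dvd_iff, hconst, ev2_rotationEquiv]

theorem IsGenericDirection.rotate {u v : ℂ}
    (hdir : IsGenericDirection A₁ B₁ C₁ A₂ B₂ C₂ l₀ m₀ (c * u - s * v) (s * u + c * v)) :
    IsGenericDirection A₁ (c • B₁ + s • C₁) (-s • B₁ + c • C₁) A₂ (c • B₂ + s • C₂)
      (-s • B₂ + c • C₂) (c * l₀ + s * m₀) (-s * l₀ + c * m₀) u v := by
  have hl (x : ℂ) : c * (c * l₀ + s * m₀ + x * u) - s * (-s * l₀ + c * m₀ + x * v) =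
      l₀ + x * (c * u - s * v) := by linear_combination l₀ * h
  have hm (x : ℂ) : s * (c * l₀ + s * m₀ + x * u) + c * (-s * l₀ + c * m₀ + x * v) =
      m₀ + x * (s * u + c * v) := by linear_combination m₀ * h
  obtain ⟨h₁, h₂, h₃⟩ := hdir
  constructor <;>
    simpa only [charPoly_rotate h, ev2_rotationEquiv, isFiniteEigW_rotate_iff h, hl, hm]

end Rotation

theorem exists_angle_slopes_notMem {T : Set ℂ} (hT : T.Finite) :
    ∃ φ : ℝ, 0 < φ ∧ φ < Real.pi / 2 ∧ (Real.sin φ / Real.cos φ : ℂ) ∉ T ∧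
      (Real.cos φ / -Real.sin φ : ℂ) ∉ T := by
  have hinj : Function.Injective fun t : ℝ => (-(t : ℂ)⁻¹) :=
    neg_injective.comp (inv_injective.comp Complex.ofReal_injective)
  obtain ⟨t, ht, htT⟩ := (Set.Ioi_infinite (0 : ℝ)).exists_notMem_finite
    ((hT.preimage Complex.ofReal_injective.injOn).union (hT.preimage hinj.injOn))
  rw [Set.mem_union, not_or, Set.mem_preimage, Set.mem_preimage] at htT
  have htan : (Real.sin (Real.arctan t) / Real.cos (Real.arctan t) : ℂ) = t := by
    rw [← Complex.ofReal_div, ← Real.tan_eq_sin_div_cos, Real.tan_arctan]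
  refine ⟨Real.arctan t, Real.arctan_pos.2 ht, Real.arctan_lt_pi_div_two t, ?_, ?_⟩
  · rw [htan]
    exact htT.1
  · rw [div_neg, ← inv_div, htan]
    exact htT.2

/-- **Generic rotation of parameters (Lemma on assumptions).** If `W₁, W₂` are regular
pencils and `(λ₀,μ₀)` is a finite eigenvalue of the two-parameter problem, then there
is an angle `φ ∈ [0,2π)` such that after the orthogonal rotation of parameters the
rotated point is a finite eigenvalue of the rotated problem and the genericity
conditions (1)–(6) hold there. -/
theorem exists_generic_rotation {n₁ n₂ : ℕ}
    (A₁ B₁ C₁ : Matrix (Fin n₁) (Fin n₁) ℂ) (A₂ B₂ C₂ : Matrix (Fin n₂) (Fin n₂) ℂ)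
    (l₀ m₀ : ℂ)
    (hreg₁ : charPoly A₁ B₁ C₁ ≠ 0) (hreg₂ : charPoly A₂ B₂ C₂ ≠ 0)
    (heig : IsFiniteEigW A₁ B₁ C₁ A₂ B₂ C₂ l₀ m₀) :
    ∃ φ : ℝ, 0 ≤ φ ∧ φ < 2 * Real.pi ∧
      IsFiniteEigW
        A₁ ((Real.cos φ : ℂ) • B₁ + (Real.sin φ : ℂ) • C₁)
          (-(Real.sin φ : ℂ) • B₁ + (Real.cos φ : ℂ) • C₁)
        A₂ ((Real.cos φ : ℂ) • B₂ + (Real.sin φ : ℂ) • C₂)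
          (-(Real.sin φ : ℂ) • B₂ + (Real.cos φ : ℂ) • C₂)
        ((Real.cos φ : ℂ) * l₀ + (Real.sin φ : ℂ) * m₀)
        (-(Real.sin φ : ℂ) * l₀ + (Real.cos φ : ℂ) * m₀) ∧
      Generic
        A₁ ((Real.cos φ : ℂ) • B₁ + (Real.sin φ : ℂ) • C₁)
          (-(Real.sin φ : ℂ) • B₁ + (Real.cos φ : ℂ) • C₁)
        A₂ ((Real.cos φ : ℂ) • B₂ + (Real.sin φ : ℂ) • C₂)
          (-(Real.sin φ : ℂ) • B₂ + (Real.cos φ : ℂ) • C₂)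
        ((Real.cos φ : ℂ) * l₀ + (Real.sin φ : ℂ) * m₀)
        (-(Real.sin φ : ℂ) * l₀ + (Real.cos φ : ℂ) * m₀) := by
  obtain ⟨φ, hφ0, hφ, hvert, hhor⟩ := exists_angle_slopes_notMem
    (finite_setOf_not_isGenericDirection (A₁ := A₁) (A₂ := A₂) hreg₁ hreg₂ l₀ m₀)
  rw [Set.mem_ofPred_eq, not_not] at hvert hhor
  have hcos : (Real.cos φ : ℂ) ≠ 0 :=
    Complex.ofReal_ne_zero.2 (Real.cos_pos_of_mem_Ioo ⟨by linarith, hφ⟩).ne'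
  have hsin : (-Real.sin φ : ℂ) ≠ 0 :=
    neg_ne_zero.2 (Complex.ofReal_ne_zero.2 (Real.sin_pos_of_pos_of_lt_pi hφ0 (by linarith)).ne')
  have h : (Real.cos φ : ℂ) ^ 2 + (Real.sin φ : ℂ) ^ 2 = 1 := by
    exact_mod_cast Real.cos_sq_add_sin_sq φ
  have heig' := (isFiniteEigW_rotate_iff h (l := Real.cos φ * l₀ + Real.sin φ * m₀)
    (m := -Real.sin φ * l₀ + Real.cos φ * m₀)).2 <| by
      convert heig using 1
      · linear_combination l₀ * h
      · linear_combination m₀ * h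
  exact ⟨φ, hφ0.le, by linarith, heig', heig'.generic
    (.rotate h (by simpa using hhor.of_slope hsin))
    (.rotate h (by simpa using hvert.of_slope hcos))⟩
end
end
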